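/- arXiv:2101.09264 — 2 statements merged into one kernel-verified Lean document; each statement's English description precedes it below -/
import Mathlib

section
/- Let (η_k) be a sequence in ℝ^N such that Ψ(η_k) → +∞ as k → ∞ (as happens for the dual iterates of the accelerated dual gradient projection method when the primal QP is infeasible). Then ‖η_k‖_∞ → +∞ and 𝒜ᵀη_k / ‖η_k‖_∞ → 0 as k → ∞. -/
open Matrix Filter

/-!
Write `Ψ η = -q (T η) / 2 - ℓ η - r` with `q y = yᵀQ⁻¹y` and `T η = Aᵀη`. The form `q` is coercive,
`μ‖y‖² ≤ q y`, by compactness of the unit sphere. Dropping the nonpositive term `-q/2` leaves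
`Ψ η ≤ ‖ℓ‖‖η‖ - r`, so `Ψ (η k) → ∞` forces `‖η k‖ → ∞`. Once `Ψ (η k) ≥ 0`, the quadratic term is
in turn dominated by the affine one, so `‖T (η k)‖² = O(‖η k‖) = o(‖η k‖²)`.
-/

open Asymptotics Topology

section Growth

variable {ι E F : Type*} [SeminormedAddCommGroup E] [SeminormedAddCommGroup F] {l : Filter ι}
  {x : ι → E} {y : ι → F} {D C : ℝ}

theorem tendsto_norm_atTop_of_le_mul_norm_add {f : ι → ℝ} (hf : Tendsto f l atTop)
    (hle : ∀ k, f k ≤ D * ‖x k‖ + C) : Tendsto (fun k => ‖x k‖) l atTop := by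
  have hD : 0 < |D| + 1 := by positivity
  refine tendsto_atTop_mono (fun k => ?_)
    ((tendsto_atTop_add_const_right l (-C) hf).atTop_div_const hD)
  rw [div_le_iff₀ hD]
  calc f k + -C ≤ D * ‖x k‖ := by linarith [hle k]
    _ ≤ (|D| + 1) * ‖x k‖ := by gcongr; linarith [le_abs_self D]
    _ = ‖x k‖ * (|D| + 1) := mul_comm _ _

theorem isLittleO_norm_of_mul_sq_norm_le {μ : ℝ} (hμ : 0 < μ)
    (hx : Tendsto (fun k => ‖x k‖) l atTop)
    (hle : ∀ᶠ k in l, μ * ‖y k‖ ^ 2 ≤ D * ‖x k‖ + C) :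
    y =o[l] fun k => ‖x k‖ := by
  have affine_isBigO : (fun k => D * ‖x k‖ + C) =O[l] fun k => ‖x k‖ :=
    (isBigO_const_mul_self D _ l).add
      ((isLittleO_const_left.2 (.inr (tendsto_norm_atTop_atTop.comp hx))).isBigO)
  have sq_isBigO : (fun k => ‖y k‖ ^ 2) =O[l] fun k => ‖x k‖ := by
    refine IsBigO.trans (.of_bound μ⁻¹ ?_) affine_isBigO
    filter_upwards [hle] with k hk
    rw [Real.norm_of_nonneg (sq_nonneg _), le_inv_mul_iff₀ hμ]
    exact hk.trans (Real.le_norm_self _)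
  have norm_isLittleO_sq : (fun k => ‖x k‖) =o[l] fun k => ‖x k‖ ^ 2 := by
    simpa only [pow_one, Function.comp_def] using
      (isLittleO_pow_pow_atTop_of_lt one_lt_two).comp_tendsto hx
  exact .of_norm_left ((sq_isBigO.trans_isLittleO norm_isLittleO_sq).of_pow two_ne_zero)

end Growth

theorem exists_pos_forall_mul_sq_norm_le_of_posDef {F : Type*} [NormedAddCommGroup F]
    [NormedSpace ℝ F] [ProperSpace F] {q : QuadraticForm ℝ F} (hq : q.PosDef)
    (hcont : Continuous q) : ∃ μ > 0, ∀ y, μ * ‖y‖ ^ 2 ≤ q y := by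
  obtain _ | _ := subsingleton_or_nontrivial F
  · exact ⟨1, one_pos, fun y => by simp [Subsingleton.elim y 0]⟩
  obtain ⟨u, hu, hmin⟩ := (isCompact_sphere (0 : F) 1).exists_isMinOn
    (NormedSpace.sphere_nonempty.2 zero_le_one) hcont.continuousOn
  refine ⟨q u, hq u (ne_zero_of_mem_unit_sphere ⟨u, hu⟩), fun y => ?_⟩
  obtain rfl | hy := eq_or_ne y 0
  · simp
  have normalized_mem : ‖y‖⁻¹ • y ∈ Metric.sphere (0 : F) 1 := by
    simp [norm_smul, hy]
  calc q u * ‖y‖ ^ 2 ≤ q (‖y‖⁻¹ • y) * ‖y‖ ^ 2 := by gcongr; exact hmin normalized_mem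
    _ = q y := by
      rw [QuadraticMap.map_smul, smul_eq_mul]
      field_simp [norm_ne_zero_iff.2 hy]

theorem exists_pos_forall_mul_sq_norm_le_dotProduct_mulVec {n : Type*} [Fintype n]
    {P : Matrix n n ℝ} (hP : P.PosDef) : ∃ μ > 0, ∀ y : n → ℝ, μ * ‖y‖ ^ 2 ≤ y ⬝ᵥ P *ᵥ y := by
  classical
  have quadraticForm_eq : ⇑P.toQuadraticForm' = fun y => y ⬝ᵥ P *ᵥ y := by
    ext y
    simp [Matrix.toQuadraticForm', Matrix.toLinearMap₂'_apply']
  simpa only [quadraticForm_eq] using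
    exists_pos_forall_mul_sq_norm_le_of_posDef hP.toQuadraticForm'
      (by rw [quadraticForm_eq]; fun_prop)

theorem dotProduct_mul_mul_transpose_mulVec {m n R : Type*} [Fintype m] [Fintype n]
    [CommSemiring R] (A : Matrix m n R) (P : Matrix n n R) (x : m → R) :
    x ⬝ᵥ (A * P * Aᵀ) *ᵥ x = (Aᵀ *ᵥ x) ⬝ᵥ P *ᵥ (Aᵀ *ᵥ x) := by
  rw [← mulVec_mulVec, ← mulVec_mulVec, dotProduct_mulVec, ← mulVec_transpose]

theorem stmt_0_general {ι E F : Type*} [SeminormedAddCommGroup E] [NormedSpace ℝ E]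
    [SeminormedAddCommGroup F] [NormedSpace ℝ F] {l : Filter ι} {q : F → ℝ} {μ : ℝ} (hμ : 0 < μ)
    (hq : ∀ y, μ * ‖y‖ ^ 2 ≤ q y) (T : E → F) (ℓ : StrongDual ℝ E) (r : ℝ) {η : ι → E}
    (hdiv : Tendsto (fun k => -(1 / 2) * q (T (η k)) - ℓ (η k) - r) l atTop) :
    Tendsto (fun k => ‖η k‖) l atTop ∧
      Tendsto (fun k => ‖η k‖⁻¹ • T (η k)) l (𝓝 0) := by
  have neg_apply_le (x : E) : -ℓ x ≤ ‖ℓ‖ * ‖x‖ := (neg_le_abs _).trans (ℓ.le_opNorm x)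
  have q_nonneg (y : F) : 0 ≤ q y := (by positivity : 0 ≤ μ * ‖y‖ ^ 2).trans (hq y)
  have norm_tendsto : Tendsto (fun k => ‖η k‖) l atTop :=
    tendsto_norm_atTop_of_le_mul_norm_add (D := ‖ℓ‖) (C := -r) hdiv fun k => by
      linarith [neg_apply_le (η k), q_nonneg (T (η k))]
  have sq_norm_le : ∀ᶠ k in l, μ * ‖T (η k)‖ ^ 2 ≤ 2 * ‖ℓ‖ * ‖η k‖ + -2 * r := by
    filter_upwards [hdiv.eventually_ge_atTop 0] with k hk
    linarith [neg_apply_le (η k), hq (T (η k))]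
  exact ⟨norm_tendsto,
    (isLittleO_norm_of_mul_sq_norm_le hμ norm_tendsto sq_norm_le).tendsto_inv_smul_nhds_zero⟩

/-- If the dual function values Ψ(η_k) diverge to +∞ (as happens for the dual
iterates of GPAD when the primal QP is infeasible), then ‖η_k‖_∞ → +∞ and
𝒜ᵀη_k / ‖η_k‖_∞ → 0. -/
theorem stmt_0 {n N : ℕ} (Q : Matrix (Fin n) (Fin n) ℝ) (hQ : Q.PosDef)
    (c : Fin n → ℝ) (A : Matrix (Fin N) (Fin n) ℝ) (b : Fin N → ℝ)
    (d : Fin N → ℝ) (hd : d = b + (A * Q⁻¹).mulVec c)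
    (Ψ : (Fin N → ℝ) → ℝ)
    (hΨ : ∀ η, Ψ η = -(1/2) * (η ⬝ᵥ (A * Q⁻¹ * Aᵀ).mulVec η) - d ⬝ᵥ η
        - (1/2) * (c ⬝ᵥ Q⁻¹.mulVec c))
    (η : ℕ → Fin N → ℝ)
    (hdiv : Tendsto (fun k => Ψ (η k)) atTop atTop) :
    Tendsto (fun k => ‖η k‖) atTop atTop ∧
    Tendsto (fun k => fun i => Aᵀ.mulVec (η k) i / ‖η k‖) atTop
      (nhds (0 : Fin n → ℝ)) := by
  obtain ⟨μ, hμ, hcoercive⟩ := exists_pos_forall_mul_sq_norm_le_dotProduct_mulVec hQ.inv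
  simp only [hΨ, dotProduct_mul_mul_transpose_mulVec] at hdiv
  simpa only [Pi.smul_def, smul_eq_mul, inv_mul_eq_div] using
    stmt_0_general hμ hcoercive Aᵀ.mulVec (dotProductBilin ℝ ℝ d).toContinuousLinearMap _ hdiv
end

section
/- Let z* ∈ ℝⁿ and λ* ∈ ℝ^{n_λ} satisfy the KKT stationarity condition Qz* + c + 𝒜ᵀλ* = 0, and let j ∈ {1,…,n_λ} be an index with λ*_j = 0 (an inactive inequality constraint at z*) such that H_{jj} := 𝒜_j Q⁻¹ 𝒜_jᵀ ≠ 0. Define λ̄ ∈ ℝ^{n_λ} by λ̄_j = (𝒜_j z* − b_j)/H_{jj} and λ̄_i = λ*_i for all i ≠ j, and define z̄ = −Q⁻¹𝒜ᵀλ̄ − Q⁻¹c. Then z̄ satisfies the equality constraint 𝒜_j z̄ = b_j. -/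
open Matrix

/-!
Stationarity says that `z*` is the minimizer of the Lagrangian at `λ*`. Moving the `j`-th multiplier
by `t` moves this minimizer by `-t Q⁻¹𝒜ⱼᵀ`, hence lowers the value of the `j`-th constraint by
`t Hⱼⱼ`; the step `t = (𝒜ⱼz* - bⱼ) / Hⱼⱼ` removes the residual exactly.
-/

section CommRing

variable {R m n : Type*} [CommRing R] [Fintype m] [Fintype n] [DecidableEq n]

/-- The primal point `-Q⁻¹Aᵀl - Q⁻¹c` associated with the multipliers `l`: for invertible `Q` it is
the only solution `z` of the stationarity equation `Qz + c + Aᵀl = 0`. For other `Q` it has no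
meaning, since then `Q⁻¹ = 0`. -/
noncomputable def primalOfDual (Q : Matrix n n R) (c : n → R) (A : Matrix m n R) (l : m → R) :
    n → R :=
  -(Q⁻¹ *ᵥ (Aᵀ *ᵥ l)) - Q⁻¹ *ᵥ c

theorem eq_primalOfDual_of_stationary {Q : Matrix n n R} (hQ : IsUnit Q) {c : n → R}
    {A : Matrix m n R} {z : n → R} {l : m → R} (hstat : Q *ᵥ z + c + Aᵀ *ᵥ l = 0) :
    z = primalOfDual Q c A l := by
  have hQz : Q *ᵥ z = -(Aᵀ *ᵥ l) - c := by linear_combination hstat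
  calc z = Q⁻¹ *ᵥ (Q *ᵥ z) := by
        rw [mulVec_mulVec, nonsing_inv_mul Q ((isUnit_iff_isUnit_det Q).mp hQ), one_mulVec]
    _ = primalOfDual Q c A l := by rw [hQz, mulVec_sub, mulVec_neg, primalOfDual]

theorem primalOfDual_add_single [DecidableEq m] (Q : Matrix n n R) (c : n → R) (A : Matrix m n R)
    (l : m → R) (j : m) (t : R) :
    primalOfDual Q c A (l + Pi.single j t) = primalOfDual Q c A l - t • Q⁻¹ *ᵥ A j := by
  have hsingle : Aᵀ *ᵥ Pi.single j t = t • A j := by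
    rw [mulVec_single, op_smul_eq_smul, col_transpose, row]
  rw [primalOfDual, primalOfDual, mulVec_add, mulVec_add, hsingle, mulVec_smul]
  abel

theorem mulVec_primalOfDual_add_single_apply [DecidableEq m] (Q : Matrix n n R) (c : n → R)
    (A : Matrix m n R) (l : m → R) (i j : m) (t : R) :
    (A *ᵥ primalOfDual Q c A (l + Pi.single j t)) i =
      (A *ᵥ primalOfDual Q c A l) i - t * (A i ⬝ᵥ Q⁻¹ *ᵥ A j) := by
  rw [primalOfDual_add_single, mulVec_sub, mulVec_smul]
  rfl

end CommRing

theorem stmt_3_general {K m n : Type*} [Field K] [Fintype m] [Fintype n] [DecidableEq n]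
    {Q : Matrix n n K} (hQ : IsUnit Q) {c : n → K} {A : Matrix m n K} {b : m → K}
    {zstar : n → K} {lstar : m → K} (hKKT : Q *ᵥ zstar + c + Aᵀ *ᵥ lstar = 0)
    {j : m} (hH : A j ⬝ᵥ Q⁻¹ *ᵥ A j ≠ 0) {lbar : m → K}
    (hlbarj : lbar j = lstar j + ((A *ᵥ zstar) j - b j) / (A j ⬝ᵥ Q⁻¹ *ᵥ A j))
    (hlbari : ∀ i, i ≠ j → lbar i = lstar i) :
    (A *ᵥ primalOfDual Q c A lbar) j = b j := by
  classical
  have hlbar : lbar =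
      lstar + Pi.single j (((A *ᵥ zstar) j - b j) / (A j ⬝ᵥ Q⁻¹ *ᵥ A j)) := by
    ext i
    obtain rfl | hij := eq_or_ne i j
    · simpa using hlbarj
    · simpa [hij] using hlbari i hij
  rw [hlbar, mulVec_primalOfDual_add_single_apply, ← eq_primalOfDual_of_stationary hQ hKKT,
    div_mul_cancel₀ _ hH, sub_sub_cancel]

/-- Warm-start lemma: if (z*, λ*) satisfies KKT stationarity, λ*_j = 0 and
H_jj = 𝒜_j Q⁻¹ 𝒜_jᵀ ≠ 0, then the dual vector λ̄ obtained by setting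
λ̄_j = (𝒜_j z* − b_j)/H_jj and the corresponding primal vector
z̄ = −Q⁻¹𝒜ᵀλ̄ − Q⁻¹c satisfy 𝒜_j z̄ = b_j. -/
theorem stmt_3 {n nl : ℕ} (Q : Matrix (Fin n) (Fin n) ℝ) (hQ : Q.PosDef)
    (c : Fin n → ℝ) (A : Matrix (Fin nl) (Fin n) ℝ) (b : Fin nl → ℝ)
    (zstar : Fin n → ℝ) (lstar : Fin nl → ℝ)
    (hKKT : Q.mulVec zstar + c + Aᵀ.mulVec lstar = 0)
    (j : Fin nl) (hjl : lstar j = 0)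
    (Hjj : ℝ) (hHjj : Hjj = A j ⬝ᵥ Q⁻¹.mulVec (A j)) (hHjj0 : Hjj ≠ 0)
    (lbar : Fin nl → ℝ)
    (hlbarj : lbar j = (A.mulVec zstar j - b j) / Hjj)
    (hlbari : ∀ i, i ≠ j → lbar i = lstar i)
    (zbar : Fin n → ℝ)
    (hzbar : zbar = -(Q⁻¹.mulVec (Aᵀ.mulVec lbar)) - Q⁻¹.mulVec c) :
    A.mulVec zbar j = b j := by
  subst hHjj hzbar
  exact stmt_3_general hQ.isUnit hKKT hHjj0 (by rw [hlbarj, hjl, zero_add]) hlbari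
end
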